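/- For i = 1,2, let P̃ᵢ be an almost surely discrete random probability measure on X such that the mean measure E[P̃ᵢ] is atomless, and let f : Y × X → [0,1] be a probability density kernel. If the updated kernel k_f is c₀-universal and the kernel variances Var_k(f_{P̃ᵢ}) are strictly positive, then Corr_k(f_{P̃₁}, f_{P̃₂}) = 1 if and only if f_{P̃₁} = f_{P̃₂} almost surely. -/

import Mathlib

/-!
Write `m_i(ω) ∈ H` for the embedding of the mixture `f_{P_i(ω)}`. Correlation one is the equality
case of Cauchy–Schwarz in `L²(Ω; H)` (`ae_smul_eq_smul_of_integral_inner`), so with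
`t² = Var m₁`, `s² = Var m₂` one has `s (m₁ - E m₁) = t (m₂ - E m₂)` almost surely.

By Fubini, `m_i(ω) = ∫ φ dP_i(ω)` (`meanEmb_mixMeasure`), where `φ = mixFeature` satisfies
`⟪φ x, φ x'⟫ = k_f(x, x')` (`inner_mixFeature`), and `E m_i = ∫ φ dE[P_i]` (`random_meanEmb`).
Hence the finite measures `s P₁(ω) + t E[P₂]` and `t P₂(ω) + s E[P₁]` have the same embedding under
`k_f`, and injectivity on signed measures makes them equal (`finiteMeasure_ext_of_injective`).
The `P_i(ω)` live on a countable set, which the atomless measures `E[P_i]` do not charge, so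
`s P₁(ω) = t P₂(ω)` (`smul_eq_smul_of_discrete_atomless`). Total masses give `s = t`, whence
`P₁(ω) = P₂(ω)`. The converse is immediate, since the almost surely equal embeddings have
covariance equal to their common variance.
-/

open MeasureTheory ProbabilityTheory Filter
open scoped RealInnerProductSpace ENNReal NNReal

noncomputable section

/-- A positive-definite function `k`. -/
def IsPosDef {X : Type*} (k : X → X → ℝ) : Prop :=
  ∀ (n : ℕ) (x : Fin n → X) (c : Fin n → ℝ),
    0 ≤ ∑ i : Fin n, ∑ j : Fin n, c i * c j * k (x i) (x j)

/-- A bounded, measurable, symmetric, positive-definite kernel. -/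
structure IsKernel {X : Type*} [MeasurableSpace X] (k : X → X → ℝ) : Prop where
  measurable : Measurable (Function.uncurry k)
  bounded : ∃ C : ℝ, ∀ x y, |k x y| ≤ C
  symm : ∀ x y, k x y = k y x
  posDef : IsPosDef k

/-- A realization of the reproducing kernel Hilbert space of `k`: a Hilbert space together with
a feature map reproducing `k` whose feature vectors span a dense subspace. -/
structure FeatureMap {X : Type*} [MeasurableSpace X] (k : X → X → ℝ)
    (H : Type*) [NormedAddCommGroup H] [InnerProductSpace ℝ H] : Type _ where
  toFun : X → H
  stronglyMeasurable : StronglyMeasurable toFun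
  repro : ∀ x y, ⟪toFun x, toFun y⟫ = k x y
  dense_span : Dense (Submodule.span ℝ (Set.range toFun) : Set H)

/-- Kernel mean embedding of a measure, as a Bochner integral of the feature map. -/
def meanEmb {X : Type*} [MeasurableSpace X] {k : X → X → ℝ} {H : Type*}
    [NormedAddCommGroup H] [InnerProductSpace ℝ H] [CompleteSpace H]
    (F : FeatureMap k H) (μ : Measure X) : H :=
  ∫ x, F.toFun x ∂μ

/-- Kernel covariance of two random probability measures,
`Cov_k(P₁,P₂) = E[⟪μ_k(P₁) - E[μ_k(P₁)], μ_k(P₂) - E[μ_k(P₂)]⟫]`. -/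
def kerCov {X : Type*} [MeasurableSpace X] {k : X → X → ℝ} {H : Type*}
    [NormedAddCommGroup H] [InnerProductSpace ℝ H] [CompleteSpace H]
    {Ω : Type*} [MeasurableSpace Ω]
    (F : FeatureMap k H) (Pr : Measure Ω) (P₁ P₂ : Ω → Measure X) : ℝ :=
  ∫ ω, ⟪meanEmb F (P₁ ω) - ∫ ω', meanEmb F (P₁ ω') ∂Pr,
        meanEmb F (P₂ ω) - ∫ ω', meanEmb F (P₂ ω') ∂Pr⟫ ∂Pr

/-- Kernel variance of a random probability measure. -/
def kerVar {X : Type*} [MeasurableSpace X] {k : X → X → ℝ} {H : Type*}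
    [NormedAddCommGroup H] [InnerProductSpace ℝ H] [CompleteSpace H]
    {Ω : Type*} [MeasurableSpace Ω]
    (F : FeatureMap k H) (Pr : Measure Ω) (P : Ω → Measure X) : ℝ :=
  kerCov F Pr P P

/-- Kernel correlation of two random probability measures. -/
def kerCorr {X : Type*} [MeasurableSpace X] {k : X → X → ℝ} {H : Type*}
    [NormedAddCommGroup H] [InnerProductSpace ℝ H] [CompleteSpace H]
    {Ω : Type*} [MeasurableSpace Ω]
    (F : FeatureMap k H) (Pr : Measure Ω) (P₁ P₂ : Ω → Measure X) : ℝ :=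
  kerCov F Pr P₁ P₂ / (Real.sqrt (kerVar F Pr P₁) * Real.sqrt (kerVar F Pr P₂))

/-- Covariance of two real random variables. -/
def rCov {Ω : Type*} [MeasurableSpace Ω] (Pr : Measure Ω) (U V : Ω → ℝ) : ℝ :=
  ∫ ω, (U ω - ∫ ω', U ω' ∂Pr) * (V ω - ∫ ω', V ω' ∂Pr) ∂Pr

/-- Variance of a real random variable. -/
def rVar {Ω : Type*} [MeasurableSpace Ω] (Pr : Measure Ω) (U : Ω → ℝ) : ℝ :=
  rCov Pr U U

/-- Pearson correlation of two real random variables. -/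
def rCorr {Ω : Type*} [MeasurableSpace Ω] (Pr : Measure Ω) (U V : Ω → ℝ) : ℝ :=
  rCov Pr U V / (Real.sqrt (rVar Pr U) * Real.sqrt (rVar Pr V))

end

noncomputable section

/-- A probability density kernel `f : Y × X → [0,1]` with respect to the reference
measure `ν` on `Y`. -/
structure IsDensityKernel {Y X : Type*} [MeasurableSpace Y] [MeasurableSpace X]
    (ν : Measure Y) (f : Y → X → ℝ) : Prop where
  measurable : Measurable (Function.uncurry f)
  nonneg : ∀ y x, 0 ≤ f y x
  le_one : ∀ y x, f y x ≤ 1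
  integral_one : ∀ x, ∫ y, f y x ∂ν = 1

/-- The mixture density `f_P(y) = ∫ f(y;x) dP(x)`. -/
def mixDensity {Y X : Type*} [MeasurableSpace X] (f : Y → X → ℝ) (P : Measure X) :
    Y → ℝ := fun y => ∫ x, f y x ∂P

/-- The mixture measure on `Y` with density `f_P` with respect to `ν`. -/
def mixMeasure {Y X : Type*} [MeasurableSpace Y] [MeasurableSpace X]
    (ν : Measure Y) (f : Y → X → ℝ) (P : Measure X) : Measure Y :=
  ν.withDensity fun y => ENNReal.ofReal (mixDensity f P y)

/-- The updated kernel `k_f(x₁,x₂) = ∬ k(y₁,y₂) f(y₁;x₁) f(y₂;x₂) dy₁ dy₂`. -/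
def updatedKernel {Y X : Type*} [MeasurableSpace Y] (ν : Measure Y)
    (k : Y → Y → ℝ) (f : Y → X → ℝ) : X → X → ℝ := fun x₁ x₂ =>
  ∫ y₁, ∫ y₂, k y₁ y₂ * f y₁ x₁ * f y₂ x₂ ∂ν ∂ν

/-- The family `{f(·;x)}ₓ` is identifiable: mixtures determine the mixing measure. -/
def Identifiable {Y X : Type*} [MeasurableSpace Y] [MeasurableSpace X]
    (ν : Measure Y) (f : Y → X → ℝ) : Prop :=
  ∀ P₁ P₂ : Measure X, IsProbabilityMeasure P₁ → IsProbabilityMeasure P₂ →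
    mixDensity f P₁ =ᵐ[ν] mixDensity f P₂ → P₁ = P₂

/-- A kernel is characteristic if the kernel mean embedding
`μ ↦ (y ↦ ∫ k(x,y) dμ(x))` is injective on probability measures. -/
def IsCharacteristic {Z : Type*} [MeasurableSpace Z] (k : Z → Z → ℝ) : Prop :=
  ∀ μ₁ μ₂ : Measure Z, IsProbabilityMeasure μ₁ → IsProbabilityMeasure μ₂ →
    (∀ y, ∫ x, k x y ∂μ₁ = ∫ x, k x y ∂μ₂) → μ₁ = μ₂

end

noncomputable section

/-- A kernel vanishes at infinity (is `c₀`). -/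
def IsC0Kernel {Z : Type*} [TopologicalSpace Z] (k : Z → Z → ℝ) : Prop :=
  ∀ ε : ℝ, 0 < ε → ∀ y : Z, IsCompact {x : Z | ε ≤ |k x y|}

/-- The kernel mean embedding of a bounded signed measure via the Jordan decomposition. -/
def signedMeanEmb {Z : Type*} [MeasurableSpace Z] (k : Z → Z → ℝ)
    (ξ : SignedMeasure Z) : Z → ℝ := fun y =>
  (∫ x, k x y ∂ξ.toJordanDecomposition.posPart)
    - ∫ x, k x y ∂ξ.toJordanDecomposition.negPart

/-- A kernel is `c₀`-universal if it is `c₀` and its kernel mean embedding is injective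
on the space of bounded signed measures. -/
def IsC0Universal {Z : Type*} [TopologicalSpace Z] [MeasurableSpace Z]
    (k : Z → Z → ℝ) : Prop :=
  IsC0Kernel k ∧ Function.Injective (signedMeanEmb k)

/-- A measure is discrete (purely atomic) if it is carried by a countable set. -/
def IsDiscreteMeasure {Z : Type*} [MeasurableSpace Z] (μ : Measure Z) : Prop :=
  ∃ S : Set Z, S.Countable ∧ μ Sᶜ = 0

/-- An injective kernel mean embedding on signed measures separates finite measures, provided the
kernel sections are integrable: the Jordan parts of `A - B` differ from `A` and `B` by a common
measure, so they have the same embedding as soon as `A` and `B` do. -/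
lemma finiteMeasure_ext_of_injective {Z : Type*} [MeasurableSpace Z] {κ : Z → Z → ℝ}
    (hinj : Function.Injective (signedMeanEmb κ))
    (hint : ∀ (μ : Measure Z) [IsFiniteMeasure μ] (z : Z), Integrable (fun x => κ x z) μ)
    (A B : Measure Z) [IsFiniteMeasure A] [IsFiniteMeasure B]
    (h : ∀ z, ∫ x, κ x z ∂A = ∫ x, κ x z ∂B) : A = B := by
  set ξ : SignedMeasure Z := A.toSignedMeasure - B.toSignedMeasure with hξ
  set p := ξ.toJordanDecomposition.posPart with hp
  set n := ξ.toJordanDecomposition.negPart with hn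
  have hJ : p.toSignedMeasure - n.toSignedMeasure = A.toSignedMeasure - B.toSignedMeasure :=
    SignedMeasure.toSignedMeasure_toJordanDecomposition ξ
  have hpn : p + B = A + n := by
    rw [← Measure.toSignedMeasure_eq_toSignedMeasure_iff, Measure.toSignedMeasure_add,
      Measure.toSignedMeasure_add]
    have := sub_eq_sub_iff_add_eq_add.1 hJ
    exact this
  have h0 : signedMeanEmb κ ξ = signedMeanEmb κ 0 := by
    funext z
    have e1 : ∫ x, κ x z ∂(p + B) = ∫ x, κ x z ∂(A + n) := by rw [hpn]
    rw [integral_add_measure (hint _ z) (hint _ z),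
      integral_add_measure (hint _ z) (hint _ z), h z] at e1
    simp only [signedMeanEmb, SignedMeasure.toJordanDecomposition_zero,
      JordanDecomposition.zero_posPart, JordanDecomposition.zero_negPart, sub_self]
    rw [← hp, ← hn]
    linarith
  have hz : A.toSignedMeasure - B.toSignedMeasure = 0 := hinj h0
  exact Measure.toSignedMeasure_eq_toSignedMeasure_iff.1 (sub_eq_zero.1 hz)

/-- Discrete parts agree in an identity between sums of discrete and atomless measures: on a
countable set carrying both discrete measures the atomless ones vanish. -/
lemma smul_eq_smul_of_discrete_atomless {Z : Type*} [MeasurableSpace Z]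
    [MeasurableSingletonClass Z] {P Q M N : Measure Z} {s t : ℝ≥0}
    (hP : IsDiscreteMeasure P) (hQ : IsDiscreteMeasure Q)
    (hM : ∀ z, M {z} = 0) (hN : ∀ z, N {z} = 0)
    (h : s • P + t • M = t • Q + s • N) : s • P = t • Q := by
  obtain ⟨S, hS, hPS⟩ := hP
  obtain ⟨T, hT, hQT⟩ := hQ
  have hST := hS.union hT
  have hM0 : M (S ∪ T) = 0 := by
    rw [← Set.biUnion_of_singleton (S ∪ T)]
    exact (measure_biUnion_null_iff hST).2 fun z _ => hM z
  have hN0 : N (S ∪ T) = 0 := by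
    rw [← Set.biUnion_of_singleton (S ∪ T)]
    exact (measure_biUnion_null_iff hST).2 fun z _ => hN z
  have hP0 : P (S ∪ T)ᶜ = 0 :=
    measure_mono_null (Set.compl_subset_compl.2 Set.subset_union_left) hPS
  have hQ0 : Q (S ∪ T)ᶜ = 0 :=
    measure_mono_null (Set.compl_subset_compl.2 Set.subset_union_right) hQT
  have hmeas := hST.measurableSet
  ext B hB
  have key := congrArg (fun m : Measure Z => m (B ∩ (S ∪ T))) h
  have hM1 : M (B ∩ (S ∪ T)) = 0 := measure_mono_null Set.inter_subset_right hM0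
  have hN1 : N (B ∩ (S ∪ T)) = 0 := measure_mono_null Set.inter_subset_right hN0
  have hP1 : P (B ∩ (S ∪ T)) = P B := by
    rw [← measure_inter_add_sdiff B hmeas]
    rw [show P (B \ (S ∪ T)) = 0 from measure_mono_null (fun x hx => hx.2) hP0, add_zero]
  have hQ1 : Q (B ∩ (S ∪ T)) = Q B := by
    rw [← measure_inter_add_sdiff B hmeas]
    rw [show Q (B \ (S ∪ T)) = 0 from measure_mono_null (fun x hx => hx.2) hQ0, add_zero]
  simpa [hM1, hN1, hP1, hQ1] using key

lemma MeasureTheory.MemLp.integrable_inner_real {Ω H : Type*} [MeasurableSpace Ω]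
    {Pr : Measure Ω} [NormedAddCommGroup H] [InnerProductSpace ℝ H] {U V : Ω → H}
    (hU : MemLp U 2 Pr) (hV : MemLp V 2 Pr) : Integrable (fun ω => ⟪U ω, V ω⟫) Pr :=
  (hU.norm.integrable_mul hV.norm).mono' (hU.1.inner hV.1)
    (Eventually.of_forall fun _ => norm_inner_le_norm _ _)

/-- Equality case of Cauchy–Schwarz in `L²(Ω; H)`. -/
lemma ae_smul_eq_smul_of_integral_inner {Ω H : Type*} [MeasurableSpace Ω] {Pr : Measure Ω}
    [NormedAddCommGroup H] [InnerProductSpace ℝ H] {U V : Ω → H}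
    (hUU : Integrable (fun ω => ⟪U ω, U ω⟫) Pr) (hUV : Integrable (fun ω => ⟪U ω, V ω⟫) Pr)
    (hVV : Integrable (fun ω => ⟪V ω, V ω⟫) Pr) {s t : ℝ}
    (hU : ∫ ω, ⟪U ω, U ω⟫ ∂Pr = t ^ 2) (hV : ∫ ω, ⟪V ω, V ω⟫ ∂Pr = s ^ 2)
    (hC : ∫ ω, ⟪U ω, V ω⟫ ∂Pr = t * s) : ∀ᵐ ω ∂Pr, s • U ω = t • V ω := by
  have hexp : ∀ ω, ⟪s • U ω - t • V ω, s • U ω - t • V ω⟫ =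
      s ^ 2 * ⟪U ω, U ω⟫ - 2 * s * t * ⟪U ω, V ω⟫ + t ^ 2 * ⟪V ω, V ω⟫ := by
    intro ω
    simp only [inner_sub_left, inner_sub_right, inner_smul_left, inner_smul_right,
      real_inner_comm (U ω) (V ω)]
    simp
    ring
  have hint : Integrable (fun ω => ⟪s • U ω - t • V ω, s • U ω - t • V ω⟫) Pr := by
    simp only [hexp]
    exact ((hUU.const_mul _).sub (hUV.const_mul _)).add (hVV.const_mul _)
  have h0 : ∫ ω, ⟪s • U ω - t • V ω, s • U ω - t • V ω⟫ ∂Pr = 0 := by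
    simp only [hexp]
    have hsub : Integrable (fun ω => s ^ 2 * ⟪U ω, U ω⟫ - 2 * s * t * ⟪U ω, V ω⟫) Pr :=
      (hUU.const_mul _).sub (hUV.const_mul _)
    rw [integral_add hsub (hVV.const_mul _), integral_sub (hUU.const_mul _) (hUV.const_mul _), integral_const_mul, integral_const_mul,
      integral_const_mul, hU, hV, hC]
    ring
  rw [integral_eq_zero_iff_of_nonneg (fun ω => real_inner_self_nonneg) hint] at h0
  filter_upwards [h0] with ω hω
  exact sub_eq_zero.1 (inner_self_eq_zero.1 hω)

section Embedding

variable {X Y H : Type*} [MeasurableSpace X] [MeasurableSpace Y] {ν : Measure Y}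
  {f : Y → X → ℝ} {k : Y → Y → ℝ}
  [NormedAddCommGroup H] [InnerProductSpace ℝ H]

lemma FeatureMap.exists_norm_le (F : FeatureMap k H) (hk : IsKernel k) :
    ∃ M, 0 ≤ M ∧ ∀ y, ‖F.toFun y‖ ≤ M := by
  obtain ⟨C, hC⟩ := hk.bounded
  refine ⟨√C, Real.sqrt_nonneg _, fun y => Real.le_sqrt_of_sq_le ?_⟩
  rw [← real_inner_self_eq_norm_sq, F.repro]
  exact (le_abs_self _).trans (hC y y)

lemma IsDensityKernel.integrable (hf : IsDensityKernel ν f) (x : X) :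
    Integrable (fun y => f y x) ν := by
  by_contra h
  have := hf.integral_one x
  rw [integral_undef h] at this
  exact zero_ne_one this

/-- The feature map of the updated kernel: `x` is sent to the embedding of the probability
measure with density `f(·;x)`. -/
def mixFeature (ν : Measure Y) (f : Y → X → ℝ) (F : FeatureMap k H) (x : X) : H :=
  ∫ y, f y x • F.toFun y ∂ν

lemma integrable_mixFeature_integrand (hf : IsDensityKernel ν f) (hk : IsKernel k)
    (F : FeatureMap k H) (x : X) : Integrable (fun y => f y x • F.toFun y) ν := by
  obtain ⟨M, -, hM⟩ := F.exists_norm_le hk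
  exact (hf.integrable x).smul_bdd M F.stronglyMeasurable.aestronglyMeasurable
    (Eventually.of_forall hM)

lemma stronglyMeasurable_mixIntegrand (hf : IsDensityKernel ν f) (F : FeatureMap k H) :
    StronglyMeasurable (fun q : X × Y => f q.2 q.1 • F.toFun q.2) :=
  (hf.measurable.comp measurable_swap).stronglyMeasurable.smul
    (F.stronglyMeasurable.comp_measurable measurable_snd)

lemma stronglyMeasurable_mixFeature [SFinite ν] (hf : IsDensityKernel ν f)
    (F : FeatureMap k H) : StronglyMeasurable (mixFeature ν f F) :=
  (stronglyMeasurable_mixIntegrand hf F).integral_prod_right'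

lemma norm_mixFeature_le (hf : IsDensityKernel ν f) (F : FeatureMap k H) {M : ℝ}
    (hM : ∀ y, ‖F.toFun y‖ ≤ M) (x : X) : ‖mixFeature ν f F x‖ ≤ M := by
  calc ‖mixFeature ν f F x‖ ≤ ∫ y, f y x * M ∂ν := by
        refine norm_integral_le_of_norm_le ((hf.integrable x).mul_const M)
          (Eventually.of_forall fun y => ?_)
        rw [norm_smul, Real.norm_of_nonneg (hf.nonneg y x)]
        exact mul_le_mul_of_nonneg_left (hM y) (hf.nonneg y x)
    _ = M := by rw [integral_mul_const, hf.integral_one, one_mul]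

lemma integrable_mixFeature [SFinite ν] (hf : IsDensityKernel ν f) (hk : IsKernel k)
    (F : FeatureMap k H) (μ : Measure X) [IsFiniteMeasure μ] :
    Integrable (mixFeature ν f F) μ := by
  obtain ⟨M, -, hM⟩ := F.exists_norm_le hk
  exact Integrable.of_bound (stronglyMeasurable_mixFeature hf F).aestronglyMeasurable M
    (Eventually.of_forall (norm_mixFeature_le hf F hM))

variable [CompleteSpace H]

lemma inner_mixFeature (hf : IsDensityKernel ν f) (hk : IsKernel k)
    (F : FeatureMap k H) (x₁ x₂ : X) :
    ⟪mixFeature ν f F x₁, mixFeature ν f F x₂⟫ = updatedKernel ν k f x₁ x₂ := by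
  rw [updatedKernel, real_inner_comm]
  nth_rw 2 [mixFeature]
  rw [← integral_inner (integrable_mixFeature_integrand hf hk F x₁)]
  refine integral_congr_ae (Eventually.of_forall fun y₁ => ?_)
  dsimp only
  rw [real_inner_comm, mixFeature, ← integral_inner (integrable_mixFeature_integrand hf hk F x₂)]
  refine integral_congr_ae (Eventually.of_forall fun y₂ => ?_)
  dsimp only
  rw [real_inner_smul_left, real_inner_smul_right, F.repro]
  ring

lemma integrable_updatedKernel [SFinite ν] (hf : IsDensityKernel ν f) (hk : IsKernel k)
    (F : FeatureMap k H) (μ : Measure X) [IsFiniteMeasure μ] (z : X) :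
    Integrable (fun x => updatedKernel ν k f x z) μ := by
  simp only [← inner_mixFeature hf hk F]
  exact (integrable_mixFeature hf hk F μ).inner_const _

lemma integral_updatedKernel [SFinite ν] (hf : IsDensityKernel ν f) (hk : IsKernel k)
    (F : FeatureMap k H) (μ : Measure X) [IsFiniteMeasure μ] (z : X) :
    ∫ x, updatedKernel ν k f x z ∂μ = ⟪mixFeature ν f F z, ∫ x, mixFeature ν f F x ∂μ⟫ := by
  rw [← integral_inner (integrable_mixFeature hf hk F μ)]
  refine integral_congr_ae (Eventually.of_forall fun x => ?_)
  dsimp only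
  rw [← inner_mixFeature hf hk F, real_inner_comm]

/-- The embedding of a mixture under `k` is the embedding of the mixing measure under the updated
kernel, by Fubini. -/
lemma meanEmb_mixMeasure [SFinite ν] (hf : IsDensityKernel ν f) (hk : IsKernel k)
    (F : FeatureMap k H) (P : Measure X) [IsProbabilityMeasure P] :
    meanEmb F (mixMeasure ν f P) = ∫ x, mixFeature ν f F x ∂P := by
  have hmeas : Measurable (mixDensity f P) :=
    (hf.measurable.stronglyMeasurable.integral_prod_right' (ν := P)).measurable
  have hnn : ∀ y, 0 ≤ mixDensity f P y := fun y => integral_nonneg (hf.nonneg y)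
  rw [meanEmb, mixMeasure, integral_withDensity_eq_integral_toReal_smul hmeas.ennreal_ofReal
    (Eventually.of_forall fun _ => ENNReal.ofReal_lt_top)]
  have hint : Integrable (fun q : X × Y => f q.2 q.1 • F.toFun q.2) (P.prod ν) := by
    obtain ⟨M, hM0, hM⟩ := F.exists_norm_le hk
    rw [integrable_prod_iff (stronglyMeasurable_mixIntegrand hf F).aestronglyMeasurable]
    refine ⟨Eventually.of_forall fun x => integrable_mixFeature_integrand hf hk F x, ?_⟩
    refine Integrable.of_bound
      (stronglyMeasurable_mixIntegrand hf F).norm.integral_prod_right'.aestronglyMeasurable M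
      (Eventually.of_forall fun x => ?_)
    rw [Real.norm_of_nonneg (integral_nonneg fun _ => norm_nonneg _)]
    calc ∫ y, ‖f y x • F.toFun y‖ ∂ν ≤ ∫ y, f y x * M ∂ν := by
          refine integral_mono (integrable_mixFeature_integrand hf hk F x).norm
            ((hf.integrable x).mul_const M) fun y => ?_
          dsimp only
          rw [norm_smul, Real.norm_of_nonneg (hf.nonneg y x)]
          exact mul_le_mul_of_nonneg_left (hM y) (hf.nonneg y x)
      _ = M := by rw [integral_mul_const, hf.integral_one, one_mul]
  unfold mixFeature
  rw [integral_integral_swap hint]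
  refine integral_congr_ae (Eventually.of_forall fun y => ?_)
  dsimp only
  rw [ENNReal.toReal_ofReal (hnn y), integral_smul_const, mixDensity]

end Embedding

lemma integral_bind_of_integrable {Ω X E : Type*} [MeasurableSpace Ω] [MeasurableSpace X]
    [NormedAddCommGroup E] [NormedSpace ℝ E] {Pr : Measure Ω} [IsProbabilityMeasure Pr]
    {P : Ω → Measure X} (hP : Measurable P) {g : X → E} (hg : Integrable g (Pr.bind P)) :
    ∫ x, g x ∂Pr.bind P = ∫ ω, ∫ x, g x ∂P ω ∂Pr := by
  have h : Pr.bind P = ((⟨P, hP⟩ : Kernel Ω X) ∘ₖ Kernel.const Unit Pr) () :=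
    Measure.comp_eq_comp_const_apply (κ := ⟨P, hP⟩)
  rw [h] at hg ⊢
  exact Kernel.integral_comp hg

/-- The mean measure is a probability measure, the random embedding of the mixture is
square-integrable, and its expectation is the embedding of the mean measure under the updated
kernel. -/
lemma random_meanEmb {Ω X Y H : Type*} [MeasurableSpace Ω] [MeasurableSpace X] [MeasurableSpace Y]
    {ν : Measure Y} [SFinite ν] {f : Y → X → ℝ} {k : Y → Y → ℝ}
    [NormedAddCommGroup H] [InnerProductSpace ℝ H] [CompleteSpace H]
    (hf : IsDensityKernel ν f) (hk : IsKernel k) (F : FeatureMap k H)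
    {Pr : Measure Ω} [IsProbabilityMeasure Pr] {P : Ω → Measure X}
    (hP : ∀ ω, IsProbabilityMeasure (P ω)) (hPm : Measurable P) :
    IsProbabilityMeasure (Pr.bind P) ∧
    MemLp (fun ω => meanEmb F (mixMeasure ν f (P ω))) 2 Pr ∧
    ∫ ω, meanEmb F (mixMeasure ν f (P ω)) ∂Pr = ∫ x, mixFeature ν f F x ∂Pr.bind P := by
  have hbind : IsProbabilityMeasure (Pr.bind P) :=
    isProbabilityMeasure_bind hPm.aemeasurable (Eventually.of_forall hP)
  obtain ⟨M, hM0, hM⟩ := F.exists_norm_le hk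
  have heq : (fun ω => meanEmb F (mixMeasure ν f (P ω))) =
      fun ω => ∫ x, mixFeature ν f F x ∂P ω :=
    funext fun ω => meanEmb_mixMeasure hf hk F (P ω)
  refine ⟨hbind, ?_, ?_⟩
  · rw [heq]
    refine MemLp.of_bound ((stronglyMeasurable_mixFeature hf F).integral_kernel
      (κ := (⟨P, hPm⟩ : Kernel Ω X))).aestronglyMeasurable M (Eventually.of_forall fun ω => ?_)
    have := norm_integral_le_of_norm_le_const (μ := P ω)
      (Eventually.of_forall (norm_mixFeature_le hf F hM))
    simpa using this
  · rw [heq, integral_bind_of_integrable hPm (integrable_mixFeature hf hk F _)]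

theorem stmt_17
    {X : Type*} [TopologicalSpace X] [PolishSpace X] [LocallyCompactSpace X]
    [MeasurableSpace X] [BorelSpace X]
    {Y : Type*} [TopologicalSpace Y] [PolishSpace Y] [LocallyCompactSpace Y]
    [MeasurableSpace Y] [BorelSpace Y]
    (ν : Measure Y) [SigmaFinite ν]
    {Ω : Type*} [MeasurableSpace Ω] (Pr : Measure Ω) [IsProbabilityMeasure Pr]
    (P₁ P₂ : Ω → Measure X)
    (hP₁ : ∀ ω, IsProbabilityMeasure (P₁ ω)) (hP₂ : ∀ ω, IsProbabilityMeasure (P₂ ω))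
    (hP₁m : Measurable P₁) (hP₂m : Measurable P₂)
    -- almost surely discrete random probabilities with atomless mean measures
    (hd₁ : ∀ᵐ ω ∂Pr, IsDiscreteMeasure (P₁ ω))
    (hd₂ : ∀ᵐ ω ∂Pr, IsDiscreteMeasure (P₂ ω))
    (ha₁ : ∀ z : X, Pr.bind P₁ {z} = 0) (ha₂ : ∀ z : X, Pr.bind P₂ {z} = 0)
    -- a probability density kernel
    (f : Y → X → ℝ) (hf : IsDensityKernel ν f)
    -- a kernel `k` on `Y` with a realization of its RKHS
    {k : Y → Y → ℝ} (hk : IsKernel k)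
    {H : Type*} [NormedAddCommGroup H] [InnerProductSpace ℝ H] [CompleteSpace H]
    (F : FeatureMap k H)
    -- the updated kernel `k_f` is `c₀`-universal
    (hkf : IsC0Universal (updatedKernel ν k f))
    -- strictly positive kernel variances of the mixtures
    (hV₁ : 0 < kerVar F Pr fun ω => mixMeasure ν f (P₁ ω))
    (hV₂ : 0 < kerVar F Pr fun ω => mixMeasure ν f (P₂ ω)) :
    kerCorr F Pr (fun ω => mixMeasure ν f (P₁ ω)) (fun ω => mixMeasure ν f (P₂ ω)) = 1
      ↔ ∀ᵐ ω ∂Pr, mixMeasure ν f (P₁ ω) = mixMeasure ν f (P₂ ω) := by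
  obtain ⟨hb₁, hL₁, hE₁⟩ := random_meanEmb hf hk F (Pr := Pr) hP₁ hP₁m
  obtain ⟨hb₂, hL₂, hE₂⟩ := random_meanEmb hf hk F (Pr := Pr) hP₂ hP₂m
  have hs := Real.sqrt_pos.2 hV₂
  have ht := Real.sqrt_pos.2 hV₁
  constructor
  · intro hcorr
    rw [kerCorr, div_eq_one_iff_eq (mul_pos ht hs).ne'] at hcorr
    have hU := hL₁.sub (memLp_const (∫ ω, meanEmb F (mixMeasure ν f (P₁ ω)) ∂Pr))
    have hV := hL₂.sub (memLp_const (∫ ω, meanEmb F (mixMeasure ν f (P₂ ω)) ∂Pr))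
    have hae := ae_smul_eq_smul_of_integral_inner (hU.integrable_inner_real hU)
      (hU.integrable_inner_real hV) (hV.integrable_inner_real hV)
      (Real.sq_sqrt hV₁.le).symm (Real.sq_sqrt hV₂.le).symm hcorr
    lift √(kerVar F Pr fun ω => mixMeasure ν f (P₁ ω)) to ℝ≥0 using ht.le with t
    lift √(kerVar F Pr fun ω => mixMeasure ν f (P₂ ω)) to ℝ≥0 using hs.le with s
    filter_upwards [hae, hd₁, hd₂] with ω hω hD₁ hD₂
    have := hP₁ ω
    have := hP₂ ω
    simp only [Pi.sub_apply] at hω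
    rw [meanEmb_mixMeasure hf hk F, meanEmb_mixMeasure hf hk F, hE₁, hE₂, smul_sub, smul_sub,
      sub_eq_sub_iff_add_eq_add] at hω
    have hI := fun (μ : Measure X) [IsFiniteMeasure μ] => integrable_mixFeature hf hk F μ
    have hmeas : s • P₁ ω + t • Pr.bind P₂ = t • P₂ ω + s • Pr.bind P₁ := by
      refine finiteMeasure_ext_of_injective hkf.2
        (fun μ _ z => integrable_updatedKernel hf hk F μ z) _ _ fun z => ?_
      rw [integral_updatedKernel hf hk F, integral_updatedKernel hf hk F,
        integral_add_measure (hI _) (hI _), integral_add_measure (hI _) (hI _)]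
      simp only [integral_smul_nnreal_measure]
      exact congrArg _ hω
    have hPQ := smul_eq_smul_of_discrete_atomless hD₁ hD₂ ha₂ ha₁ hmeas
    -- Comparing total masses forces the two scale factors to agree.
    have hst : s = t := by
      have h1 := congrArg (fun m : Measure X => m Set.univ) hPQ
      simpa using h1
    subst hst
    have hs0 : s ≠ 0 := by exact_mod_cast hs.ne'
    have : P₁ ω = P₂ ω := by
      have h2 := congrArg (fun m : Measure X => s⁻¹ • m) hPQ
      simpa [smul_smul, inv_mul_cancel₀ hs0] using h2
    rw [this]
  · intro h
    have hm : ∀ᵐ ω ∂Pr, meanEmb F (mixMeasure ν f (P₁ ω)) = meanEmb F (mixMeasure ν f (P₂ ω)) := by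
      filter_upwards [h] with ω hω
      rw [hω]
    have hE := integral_congr_ae hm
    have h12 : kerCov F Pr (fun ω => mixMeasure ν f (P₁ ω)) (fun ω => mixMeasure ν f (P₂ ω)) =
        kerVar F Pr fun ω => mixMeasure ν f (P₂ ω) := by
      refine integral_congr_ae ?_
      filter_upwards [hm] with ω hω
      rw [hω, hE]
    have h11 : kerVar F Pr (fun ω => mixMeasure ν f (P₁ ω)) =
        kerVar F Pr fun ω => mixMeasure ν f (P₂ ω) := by
      refine integral_congr_ae ?_
      filter_upwards [hm] with ω hω
      rw [hω, hE]
    rw [kerCorr, h12, h11, Real.mul_self_sqrt hV₂.le, div_self hV₂.ne']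

end
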